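/- arXiv:1403.3130 — 3 statements merged into one kernel-verified Lean document; each statement's English description precedes it below -/
import Mathlib

section
/- Let (A, {,}, d) be a differential graded Poisson algebra over a field k. Then the k-linear map ∂ : A^e → A^e of degree 1 determined on generators by ∂(m_a) = m_{d(a)} and ∂(h_a) = h_{d(a)}, and extended by the graded Leibniz rule ∂(xy) = ∂(x)y + (-1)^{|x|}x∂(y), is well defined on A^e (i.e. ∂ maps the defining relations m_{ab} - m_a m_b, h_{ab} - m_a h_b - (-1)^{|a||b|} m_b h_a, m_{{a,b}} - h_a m_b + (-1)^{|a||b|} m_b h_a, and h_{{a,b}} - h_a h_b + (-1)^{|a||b|} h_b h_a to relations) and satisfies ∂² = 0, so that (A^e, ∂) is a differential graded algebra. -/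
open scoped TensorProduct

noncomputable section

namespace DGPaper

universe u

/-- A differential graded Lie algebra structure on a `k`-vector space `V`. -/
structure DGLAOn (k : Type u) [Field k] (V : Type u) [AddCommGroup V] [Module k V] where
  gr : ℤ → Submodule k V
  decomp : DirectSum.Decomposition gr
  br : V →ₗ[k] V →ₗ[k] V
  br_mem : ∀ {i j : ℤ} {a b : V}, a ∈ gr i → b ∈ gr j → br a b ∈ gr (i + j)
  br_antisymm : ∀ {i j : ℤ} {a b : V}, a ∈ gr i → b ∈ gr j →
    br a b = -(((-1 : k) ^ (i * j)) • br b a)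
  br_jacobi : ∀ {i j l : ℤ} {a b c : V}, a ∈ gr i → b ∈ gr j → c ∈ gr l →
    br a (br b c) = br (br a b) c + ((-1 : k) ^ (i * j)) • br b (br a c)
  d : V →ₗ[k] V
  d_mem : ∀ {i : ℤ} {a : V}, a ∈ gr i → d a ∈ gr (i + 1)
  d_sq : ∀ a : V, d (d a) = 0
  d_br : ∀ {i j : ℤ} {a b : V}, a ∈ gr i → b ∈ gr j →
    d (br a b) = br (d a) b + ((-1 : k) ^ i) • br a (d b)

/-- A differential graded (associative, unital) algebra structure on a `k`-vector space `N`. -/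
structure DGAOn (k : Type u) [Field k] (N : Type u) [AddCommGroup N] [Module k N] where
  gr : ℤ → Submodule k N
  decomp : DirectSum.Decomposition gr
  mul : N →ₗ[k] N →ₗ[k] N
  one : N
  one_mem : one ∈ gr 0
  mul_mem : ∀ {i j : ℤ} {a b : N}, a ∈ gr i → b ∈ gr j → mul a b ∈ gr (i + j)
  mul_assoc : ∀ a b c : N, mul (mul a b) c = mul a (mul b c)
  one_mul : ∀ a : N, mul one a = a
  mul_one : ∀ a : N, mul a one = a
  d : N →ₗ[k] N
  d_mem : ∀ {i : ℤ} {a : N}, a ∈ gr i → d a ∈ gr (i + 1)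
  d_sq : ∀ a : N, d (d a) = 0
  d_mul : ∀ {i j : ℤ} {a b : N}, a ∈ gr i → b ∈ gr j →
    d (mul a b) = mul (d a) b + ((-1 : k) ^ i) • mul a (d b)

/-- A differential graded Poisson algebra structure on a `k`-vector space `M`. -/
structure DGPAOn (k : Type u) [Field k] (M : Type u) [AddCommGroup M] [Module k M] where
  gr : ℤ → Submodule k M
  decomp : DirectSum.Decomposition gr
  mul : M →ₗ[k] M →ₗ[k] M
  one : M
  one_mem : one ∈ gr 0
  mul_mem : ∀ {i j : ℤ} {a b : M}, a ∈ gr i → b ∈ gr j → mul a b ∈ gr (i + j)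
  mul_assoc : ∀ a b c : M, mul (mul a b) c = mul a (mul b c)
  one_mul : ∀ a : M, mul one a = a
  mul_one : ∀ a : M, mul a one = a
  mul_comm : ∀ {i j : ℤ} {a b : M}, a ∈ gr i → b ∈ gr j →
    mul a b = ((-1 : k) ^ (i * j)) • mul b a
  br : M →ₗ[k] M →ₗ[k] M
  br_mem : ∀ {i j : ℤ} {a b : M}, a ∈ gr i → b ∈ gr j → br a b ∈ gr (i + j)
  br_antisymm : ∀ {i j : ℤ} {a b : M}, a ∈ gr i → b ∈ gr j →
    br a b = -(((-1 : k) ^ (i * j)) • br b a)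
  br_jacobi : ∀ {i j l : ℤ} {a b c : M}, a ∈ gr i → b ∈ gr j → c ∈ gr l →
    br a (br b c) = br (br a b) c + ((-1 : k) ^ (i * j)) • br b (br a c)
  br_deriv : ∀ {i j l : ℤ} {a b c : M}, a ∈ gr i → b ∈ gr j → c ∈ gr l →
    br a (mul b c) = mul (br a b) c + ((-1 : k) ^ (i * j)) • mul b (br a c)
  d : M →ₗ[k] M
  d_mem : ∀ {i : ℤ} {a : M}, a ∈ gr i → d a ∈ gr (i + 1)
  d_sq : ∀ a : M, d (d a) = 0
  d_br : ∀ {i j : ℤ} {a b : M}, a ∈ gr i → b ∈ gr j →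
    d (br a b) = br (d a) b + ((-1 : k) ^ i) • br a (d b)
  d_mul : ∀ {i j : ℤ} {a b : M}, a ∈ gr i → b ∈ gr j →
    d (mul a b) = mul (d a) b + ((-1 : k) ^ i) • mul a (d b)

section Defs

variable {k : Type u} [Field k]

/-- The differential graded Lie algebra underlying a differential graded Poisson algebra. -/
def DGPAOn.toLie {M : Type u} [AddCommGroup M] [Module k M] (P : DGPAOn k M) :
    DGLAOn k M where
  gr := P.gr
  decomp := P.decomp
  br := P.br
  br_mem := P.br_mem
  br_antisymm := P.br_antisymm
  br_jacobi := P.br_jacobi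
  d := P.d
  d_mem := P.d_mem
  d_sq := P.d_sq
  d_br := P.d_br

section Maps

variable {M N : Type u} [AddCommGroup M] [Module k M] [AddCommGroup N] [Module k N]

/-- A morphism of differential graded algebras (degree-0, multiplicative, unital,
commuting with the differentials). -/
def IsDGAHom (E : DGAOn k M) (F : DGAOn k N) (f : M →ₗ[k] N) : Prop :=
  (∀ {n : ℤ} {x : M}, x ∈ E.gr n → f x ∈ F.gr n) ∧
  (∀ x y : M, f (E.mul x y) = F.mul (f x) (f y)) ∧
  f E.one = F.one ∧
  ∀ x : M, f (E.d x) = F.d (f x)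

/-- A morphism of differential graded Poisson algebras. -/
def IsDGPAHom (P : DGPAOn k M) (Q : DGPAOn k N) (f : M →ₗ[k] N) : Prop :=
  (∀ {n : ℤ} {x : M}, x ∈ P.gr n → f x ∈ Q.gr n) ∧
  (∀ x y : M, f (P.mul x y) = Q.mul (f x) (f y)) ∧
  f P.one = Q.one ∧
  (∀ x : M, f (P.d x) = Q.d (f x)) ∧
  ∀ x y : M, f (P.br x y) = Q.br (f x) (f y)

end Maps

section Tensor

variable {A B : Type u} [AddCommGroup A] [Module k A] [AddCommGroup B] [Module k B]

/-- `R` is the tensor product differential graded Poisson algebra structure on `A ⊗[k] B`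
induced by `P` and `Q`. -/
def IsTensorDGPA (P : DGPAOn k A) (Q : DGPAOn k B) (R : DGPAOn k (A ⊗[k] B)) : Prop :=
  (∀ n : ℤ, R.gr n = Submodule.span k {z : A ⊗[k] B |
      ∃ (i j : ℤ) (a : A) (b : B), i + j = n ∧ a ∈ P.gr i ∧ b ∈ Q.gr j ∧ z = a ⊗ₜ[k] b}) ∧
  R.one = P.one ⊗ₜ[k] Q.one ∧
  (∀ {i j i' j' : ℤ} {a a' : A} {b b' : B},
      a ∈ P.gr i → b ∈ Q.gr j → a' ∈ P.gr i' → b' ∈ Q.gr j' →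
    R.mul (a ⊗ₜ[k] b) (a' ⊗ₜ[k] b') = ((-1 : k) ^ (i' * j)) • (P.mul a a' ⊗ₜ[k] Q.mul b b')) ∧
  (∀ {i j : ℤ} {a : A} {b : B}, a ∈ P.gr i → b ∈ Q.gr j →
    R.d (a ⊗ₜ[k] b) = P.d a ⊗ₜ[k] b + ((-1 : k) ^ i) • (a ⊗ₜ[k] Q.d b)) ∧
  (∀ {i j i' j' : ℤ} {a a' : A} {b b' : B},
      a ∈ P.gr i → b ∈ Q.gr j → a' ∈ P.gr i' → b' ∈ Q.gr j' →
    R.br (a ⊗ₜ[k] b) (a' ⊗ₜ[k] b') =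
      ((-1 : k) ^ (i' * j)) • (P.br a a' ⊗ₜ[k] Q.mul b b' + P.mul a a' ⊗ₜ[k] Q.br b b'))

/-- `G` is the tensor product differential graded algebra structure on `A ⊗[k] B`
induced by `E` and `F` (with the Koszul sign rule). -/
def IsTensorDGA (E : DGAOn k A) (F : DGAOn k B) (G : DGAOn k (A ⊗[k] B)) : Prop :=
  (∀ n : ℤ, G.gr n = Submodule.span k {z : A ⊗[k] B |
      ∃ (i j : ℤ) (x : A) (y : B), i + j = n ∧ x ∈ E.gr i ∧ y ∈ F.gr j ∧ z = x ⊗ₜ[k] y}) ∧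
  G.one = E.one ⊗ₜ[k] F.one ∧
  (∀ {i j i' j' : ℤ} {x x' : A} {y y' : B},
      x ∈ E.gr i → y ∈ F.gr j → x' ∈ E.gr i' → y' ∈ F.gr j' →
    G.mul (x ⊗ₜ[k] y) (x' ⊗ₜ[k] y') = ((-1 : k) ^ (i' * j)) • (E.mul x x' ⊗ₜ[k] F.mul y y')) ∧
  (∀ {i j : ℤ} {x : A} {y : B}, x ∈ E.gr i → y ∈ F.gr j →
    G.d (x ⊗ₜ[k] y) = E.d x ⊗ₜ[k] y + ((-1 : k) ^ i) • (x ⊗ₜ[k] F.d y))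

end Tensor

section Env

variable {M : Type u} [AddCommGroup M] [Module k M]

/-- The defining relations of the universal enveloping algebra `A^e` of a differential
graded Poisson algebra, imposed on the tensor algebra of `M × M`; the first copy of `M`
gives the generators `m_a`, the second copy the generators `h_a`. -/
inductive EnvRel (P : DGPAOn k M) :
    TensorAlgebra k (M × M) → TensorAlgebra k (M × M) → Prop
  | relone : EnvRel P (TensorAlgebra.ι k ((P.one, 0) : M × M)) 1
  | relmul (a b : M) :
      EnvRel P (TensorAlgebra.ι k ((P.mul a b, 0) : M × M))
        (TensorAlgebra.ι k ((a, 0) : M × M) * TensorAlgebra.ι k ((b, 0) : M × M))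
  | relhmul {i j : ℤ} {a b : M} (ha : a ∈ P.gr i) (hb : b ∈ P.gr j) :
      EnvRel P (TensorAlgebra.ι k ((0, P.mul a b) : M × M))
        (TensorAlgebra.ι k ((a, 0) : M × M) * TensorAlgebra.ι k ((0, b) : M × M) +
          ((-1 : k) ^ (i * j)) •
            (TensorAlgebra.ι k ((b, 0) : M × M) * TensorAlgebra.ι k ((0, a) : M × M)))
  | relmbr {i j : ℤ} {a b : M} (ha : a ∈ P.gr i) (hb : b ∈ P.gr j) :
      EnvRel P (TensorAlgebra.ι k ((P.br a b, 0) : M × M))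
        (TensorAlgebra.ι k ((0, a) : M × M) * TensorAlgebra.ι k ((b, 0) : M × M) -
          ((-1 : k) ^ (i * j)) •
            (TensorAlgebra.ι k ((b, 0) : M × M) * TensorAlgebra.ι k ((0, a) : M × M)))
  | relhbr {i j : ℤ} {a b : M} (ha : a ∈ P.gr i) (hb : b ∈ P.gr j) :
      EnvRel P (TensorAlgebra.ι k ((0, P.br a b) : M × M))
        (TensorAlgebra.ι k ((0, a) : M × M) * TensorAlgebra.ι k ((0, b) : M × M) -
          ((-1 : k) ^ (i * j)) •
            (TensorAlgebra.ι k ((0, b) : M × M) * TensorAlgebra.ι k ((0, a) : M × M)))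

/-- The universal enveloping algebra `A^e` of a differential graded Poisson algebra,
as a quotient of the tensor algebra on two copies of `A`. -/
abbrev Env (P : DGPAOn k M) : Type u := RingQuot (EnvRel P)

/-- The generators `m_a` of `A^e`. -/
def mgen (P : DGPAOn k M) : M →ₗ[k] Env P :=
  (RingQuot.mkAlgHom k (EnvRel P)).toLinearMap ∘ₗ
    ((TensorAlgebra.ι k : (M × M) →ₗ[k] TensorAlgebra k (M × M)) ∘ₗ LinearMap.inl k M M)

/-- The generators `h_a` of `A^e`. -/
def hgen (P : DGPAOn k M) : M →ₗ[k] Env P :=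
  (RingQuot.mkAlgHom k (EnvRel P)).toLinearMap ∘ₗ
    ((TensorAlgebra.ι k : (M × M) →ₗ[k] TensorAlgebra k (M × M)) ∘ₗ LinearMap.inr k M M)

/-- `E` is the differential graded algebra structure on `A^e`, with the ring
multiplication of `A^e`, grading `|m_a| = |h_a| = |a|` and differential determined by
`∂(m_a) = m_{d a}`, `∂(h_a) = h_{d a}` and the graded Leibniz rule. -/
def IsEnvDGA (P : DGPAOn k M) (E : DGAOn k (Env P)) : Prop :=
  (∀ x y : Env P, E.mul x y = x * y) ∧
  E.one = 1 ∧
  (∀ {i : ℤ} {a : M}, a ∈ P.gr i → mgen P a ∈ E.gr i) ∧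
  (∀ {i : ℤ} {a : M}, a ∈ P.gr i → hgen P a ∈ E.gr i) ∧
  (∀ a : M, E.d (mgen P a) = mgen P (P.d a)) ∧
  (∀ a : M, E.d (hgen P a) = hgen P (P.d a))

end Env

section Lie

variable {V : Type u} [AddCommGroup V] [Module k V]

/-- The defining relations of the universal enveloping algebra of a differential graded
Lie algebra. -/
inductive LieRel (L : DGLAOn k V) : TensorAlgebra k V → TensorAlgebra k V → Prop
  | rel {i j : ℤ} {a b : V} (ha : a ∈ L.gr i) (hb : b ∈ L.gr j) :
      LieRel L
        (TensorAlgebra.ι k a * TensorAlgebra.ι k b -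
          ((-1 : k) ^ (i * j)) • (TensorAlgebra.ι k b * TensorAlgebra.ι k a))
        (TensorAlgebra.ι k (L.br a b))

/-- The universal enveloping algebra `U(L)` of a differential graded Lie algebra `L`. -/
abbrev ULie (L : DGLAOn k V) : Type u := RingQuot (LieRel L)

/-- The canonical map `L → U(L)`. -/
def uGen (L : DGLAOn k V) : V →ₗ[k] ULie L :=
  (RingQuot.mkAlgHom k (LieRel L)).toLinearMap ∘ₗ TensorAlgebra.ι k

/-- `E` is the differential graded algebra structure of `U(L)`. -/
def IsULieDGA (L : DGLAOn k V) (E : DGAOn k (ULie L)) : Prop :=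
  (∀ x y : ULie L, E.mul x y = x * y) ∧
  E.one = 1 ∧
  (∀ {i : ℤ} {a : V}, a ∈ L.gr i → uGen L a ∈ E.gr i) ∧
  (∀ a : V, E.d (uGen L a) = uGen L (L.d a))

/-- The graded-symmetry relations defining the graded symmetric algebra of `L`. -/
inductive SymRel (L : DGLAOn k V) : TensorAlgebra k V → TensorAlgebra k V → Prop
  | rel {i j : ℤ} {a b : V} (ha : a ∈ L.gr i) (hb : b ∈ L.gr j) :
      SymRel L (TensorAlgebra.ι k a * TensorAlgebra.ι k b)
        (((-1 : k) ^ (i * j)) • (TensorAlgebra.ι k b * TensorAlgebra.ι k a))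

/-- The graded symmetric algebra `𝕊L` of a differential graded Lie algebra `L`. -/
abbrev SymAlg (L : DGLAOn k V) : Type u := RingQuot (SymRel L)

/-- The canonical map `L → 𝕊L`. -/
def sGen (L : DGLAOn k V) : V →ₗ[k] SymAlg L :=
  (RingQuot.mkAlgHom k (SymRel L)).toLinearMap ∘ₗ TensorAlgebra.ι k

/-- `R` is the differential graded Poisson algebra structure on `𝕊L` with differential
extending `d` and bracket extending the Lie bracket of `L` as a graded biderivation. -/
def IsSymDGPA (L : DGLAOn k V) (R : DGPAOn k (SymAlg L)) : Prop :=
  (∀ x y : SymAlg L, R.mul x y = x * y) ∧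
  R.one = 1 ∧
  (∀ {i : ℤ} {a : V}, a ∈ L.gr i → sGen L a ∈ R.gr i) ∧
  (∀ a : V, R.d (sGen L a) = sGen L (L.d a)) ∧
  (∀ a b : V, R.br (sGen L a) (sGen L b) = sGen L (L.br a b))

/-- `S` is the graded semidirect product differential graded Lie algebra `L ⋊ L`. -/
def IsSemidirect (L : DGLAOn k V) (S : DGLAOn k (V × V)) : Prop :=
  (∀ n : ℤ, S.gr n = (L.gr n).prod (L.gr n)) ∧
  (∀ z : V × V, S.d z = (L.d z.1, L.d z.2)) ∧
  (∀ {i j : ℤ} {x₁ x₂ y₁ y₂ : V}, x₁ ∈ L.gr i → x₂ ∈ L.gr i → y₁ ∈ L.gr j → y₂ ∈ L.gr j →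
    S.br (x₁, x₂) (y₁, y₂) =
      (L.br x₂ y₁ - ((-1 : k) ^ (i * j)) • L.br y₂ x₁, L.br x₂ y₂))

end Lie

section Smash

variable {M : Type u} [AddCommGroup M] [Module k M]

/-- The generators `1#(ab) - a#b - (-1)^{|a||b|} b#a` of the ideal defining `A^E`
inside the smash product `A # U(A)`. -/
def smashGens (P : DGPAOn k M) : Set (M ⊗[k] ULie P.toLie) :=
  {z | ∃ (i j : ℤ) (a b : M), a ∈ P.gr i ∧ b ∈ P.gr j ∧
    z = P.one ⊗ₜ[k] uGen P.toLie (P.mul a b) - a ⊗ₜ[k] uGen P.toLie b -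
        ((-1 : k) ^ (i * j)) • (b ⊗ₜ[k] uGen P.toLie a)}

/-- The two-sided ideal generated by a set `T` in a differential graded algebra `S`. -/
def idealGen {N : Type u} [AddCommGroup N] [Module k N] (S : DGAOn k N) (T : Set N) :
    Submodule k N :=
  sInf {I : Submodule k N | T ⊆ I ∧ ∀ x ∈ I, ∀ y : N, S.mul x y ∈ I ∧ S.mul y x ∈ I}

/-- `S` is the smash product differential graded algebra `A # U(A)`. -/
def IsSmash (P : DGPAOn k M) (EU : DGAOn k (ULie P.toLie))
    (S : DGAOn k (M ⊗[k] ULie P.toLie)) : Prop :=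
  S.one = P.one ⊗ₜ[k] (1 : ULie P.toLie) ∧
  (∀ a b : M, S.mul (a ⊗ₜ[k] (1 : ULie P.toLie)) (b ⊗ₜ[k] (1 : ULie P.toLie)) =
      P.mul a b ⊗ₜ[k] (1 : ULie P.toLie)) ∧
  (∀ u v : ULie P.toLie, S.mul (P.one ⊗ₜ[k] u) (P.one ⊗ₜ[k] v) = P.one ⊗ₜ[k] (u * v)) ∧
  (∀ (a : M) (u : ULie P.toLie), S.mul (a ⊗ₜ[k] (1 : ULie P.toLie)) (P.one ⊗ₜ[k] u) =
      a ⊗ₜ[k] u) ∧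
  (∀ {i j : ℤ} {c b : M}, c ∈ P.gr i → b ∈ P.gr j →
    S.mul (P.one ⊗ₜ[k] uGen P.toLie c) (b ⊗ₜ[k] (1 : ULie P.toLie)) =
      P.br c b ⊗ₜ[k] (1 : ULie P.toLie) + ((-1 : k) ^ (i * j)) • (b ⊗ₜ[k] uGen P.toLie c)) ∧
  (∀ {i j : ℤ} {a : M} {u : ULie P.toLie}, a ∈ P.gr i → u ∈ EU.gr j →
      a ⊗ₜ[k] u ∈ S.gr (i + j)) ∧
  (∀ {i : ℤ} {a : M}, a ∈ P.gr i → ∀ u : ULie P.toLie,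
    S.d (a ⊗ₜ[k] u) = P.d a ⊗ₜ[k] u + ((-1 : k) ^ i) • (a ⊗ₜ[k] EU.d u))

/-- `R` is the quotient differential graded algebra structure of `S` by the ideal `I`. -/
def IsQuotDGA {N : Type u} [AddCommGroup N] [Module k N] (S : DGAOn k N)
    (I : Submodule k N) (R : DGAOn k (N ⧸ I)) : Prop :=
  (∀ n : ℤ, R.gr n = Submodule.map I.mkQ (S.gr n)) ∧
  R.one = I.mkQ S.one ∧
  (∀ x y : N, R.mul (I.mkQ x) (I.mkQ y) = I.mkQ (S.mul x y)) ∧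
  (∀ x : N, R.d (I.mkQ x) = I.mkQ (S.d x))

end Smash

section Op

variable {M N : Type u} [AddCommGroup M] [Module k M] [AddCommGroup N] [Module k N]

/-- `P'` is the opposite differential graded Poisson algebra of `P` (the product is
unchanged by graded commutativity, the bracket is negated). -/
def IsOpDGPA (P P' : DGPAOn k M) : Prop :=
  P'.gr = P.gr ∧ (∀ x y : M, P'.mul x y = P.mul x y) ∧ P'.one = P.one ∧ P'.d = P.d ∧
  (∀ x y : M, P'.br x y = - P.br x y)

/-- `E'` is the opposite differential graded algebra of `E` (with the Koszul sign). -/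
def IsOpDGA (E E' : DGAOn k N) : Prop :=
  E'.gr = E.gr ∧ E'.one = E.one ∧ E'.d = E.d ∧
  (∀ {i j : ℤ} {x y : N}, x ∈ E.gr i → y ∈ E.gr j →
    E'.mul x y = ((-1 : k) ^ (i * j)) • E.mul y x)

end Op

section UEnv

variable {M N : Type u} [AddCommGroup M] [Module k M] [AddCommGroup N] [Module k N]

/-- A pair `(f, g)` where `f : A → D` is a differential graded algebra map and
`g : A → D_L` is a differential graded Lie algebra map (into the graded commutator Lie
structure of `D`), satisfying the two compatibility conditions of the universal property
of the universal enveloping algebra of a differential graded Poisson algebra. -/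
def UEPair (P : DGPAOn k M) (D : DGAOn k N) (f g : M →ₗ[k] N) : Prop :=
  (∀ {n : ℤ} {x : M}, x ∈ P.gr n → f x ∈ D.gr n) ∧
  (∀ {n : ℤ} {x : M}, x ∈ P.gr n → g x ∈ D.gr n) ∧
  (∀ a b : M, f (P.mul a b) = D.mul (f a) (f b)) ∧
  f P.one = D.one ∧
  (∀ a : M, f (P.d a) = D.d (f a)) ∧
  (∀ a : M, g (P.d a) = D.d (g a)) ∧
  (∀ {i j : ℤ} {a b : M}, a ∈ P.gr i → b ∈ P.gr j →
    g (P.br a b) = D.mul (g a) (g b) - ((-1 : k) ^ (i * j)) • D.mul (g b) (g a)) ∧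
  (∀ {i j : ℤ} {a b : M}, a ∈ P.gr i → b ∈ P.gr j →
    f (P.br a b) = D.mul (g a) (f b) - ((-1 : k) ^ (i * j)) • D.mul (f b) (g a)) ∧
  (∀ {i j : ℤ} {a b : M}, a ∈ P.gr i → b ∈ P.gr j →
    g (P.mul a b) = D.mul (f a) (g b) + ((-1 : k) ^ (i * j)) • D.mul (f b) (g a))

/-- `(E, α, β)` is a universal enveloping algebra of the differential graded Poisson
algebra `P`. -/
def IsUEnv (P : DGPAOn k M) (E : DGAOn k N) (α β : M →ₗ[k] N) : Prop :=
  UEPair P E α β ∧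
  ∀ (D' : Type u) [AddCommGroup D'] [Module k D'] (D : DGAOn k D') (f g : M →ₗ[k] D'),
    UEPair P D f g →
    ∃! φ : N →ₗ[k] D',
      IsDGAHom E D φ ∧ (∀ a : M, φ (α a) = f a) ∧ (∀ a : M, φ (β a) = g a)

end UEnv

section IdealsQuotients

variable {M : Type u} [AddCommGroup M] [Module k M]

/-- `B` is a differential graded Poisson ideal of `P`. -/
def IsDGPIdeal (P : DGPAOn k M) (B : Submodule k M) : Prop :=
  (B = ⨆ n : ℤ, B ⊓ P.gr n) ∧
  (∀ x ∈ B, P.d x ∈ B) ∧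
  (∀ x ∈ B, ∀ a : M, P.mul x a ∈ B) ∧
  (∀ x ∈ B, ∀ a : M, P.mul a x ∈ B) ∧
  (∀ x ∈ B, ∀ a : M, P.br a x ∈ B)

/-- `B` is a differential graded Poisson subalgebra of `P`. -/
def IsDGPSubalg (P : DGPAOn k M) (B : Submodule k M) : Prop :=
  (B = ⨆ n : ℤ, B ⊓ P.gr n) ∧ P.one ∈ B ∧
  (∀ x ∈ B, ∀ y ∈ B, P.mul x y ∈ B) ∧
  (∀ x ∈ B, P.d x ∈ B) ∧
  (∀ x ∈ B, ∀ y ∈ B, P.br x y ∈ B)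

/-- `R` is the quotient differential graded Poisson algebra structure on `M ⧸ B`. -/
def IsQuotDGPA (P : DGPAOn k M) (B : Submodule k M) (R : DGPAOn k (M ⧸ B)) : Prop :=
  (∀ n : ℤ, R.gr n = Submodule.map B.mkQ (P.gr n)) ∧
  R.one = B.mkQ P.one ∧
  (∀ x y : M, R.mul (B.mkQ x) (B.mkQ y) = B.mkQ (P.mul x y)) ∧
  (∀ x : M, R.d (B.mkQ x) = B.mkQ (P.d x)) ∧
  (∀ x y : M, R.br (B.mkQ x) (B.mkQ y) = B.mkQ (P.br x y))

/-- `S` is the differential graded Poisson algebra structure induced on a differential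
graded Poisson subalgebra `B` of `P`. -/
def IsSubDGPA (P : DGPAOn k M) (B : Submodule k M) (S : DGPAOn k B) : Prop :=
  (∀ n : ℤ, S.gr n = Submodule.comap B.subtype (P.gr n)) ∧
  ((S.one : M) = P.one) ∧
  (∀ x y : B, (S.mul x y : M) = P.mul (x : M) (y : M)) ∧
  (∀ x : B, (S.d x : M) = P.d (x : M)) ∧
  (∀ x y : B, (S.br x y : M) = P.br (x : M) (y : M))

/-- The cocycles `ker d` of a differential graded Poisson algebra. -/
def Cocycles (P : DGPAOn k M) : Submodule k M := LinearMap.ker P.d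

/-- The coboundaries `im d`, viewed inside the cocycles. -/
def CobIn (P : DGPAOn k M) : Submodule k (Cocycles P) :=
  Submodule.comap (Cocycles P).subtype (LinearMap.range P.d)

/-- The cohomology `H(A) = ker d / im d` of a differential graded Poisson algebra. -/
abbrev Cohom (P : DGPAOn k M) : Type u := Cocycles P ⧸ CobIn P

/-- The class map `ker d → H(A)`. -/
def cohCls (P : DGPAOn k M) : Cocycles P →ₗ[k] Cohom P := (CobIn P).mkQ

/-- `R` is the graded Poisson algebra structure on the cohomology of `P` (a differential
graded Poisson algebra structure with zero differential, with the induced grading,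
product and bracket). -/
def IsCohomDGPA (P : DGPAOn k M) (R : DGPAOn k (Cohom P)) : Prop :=
  R.d = 0 ∧
  (∀ n : ℤ, R.gr n =
    Submodule.map (cohCls P) (Submodule.comap (Cocycles P).subtype (P.gr n))) ∧
  (∀ h : P.one ∈ Cocycles P, R.one = cohCls P ⟨P.one, h⟩) ∧
  (∀ (a b : Cocycles P) (h : P.mul (a : M) (b : M) ∈ Cocycles P),
    R.mul (cohCls P a) (cohCls P b) = cohCls P ⟨P.mul (a : M) (b : M), h⟩) ∧
  (∀ (a b : Cocycles P) (h : P.br (a : M) (b : M) ∈ Cocycles P),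
    R.br (cohCls P a) (cohCls P b) = cohCls P ⟨P.br (a : M) (b : M), h⟩)

end IdealsQuotients

end Defs

section ModuleDefs

variable {k : Type u} [Field k]

/-- A left differential graded module structure on `X` over the differential graded
algebra `E`. -/
structure DGModOn {N : Type u} [AddCommGroup N] [Module k N] (E : DGAOn k N)
    (X : Type u) [AddCommGroup X] [Module k X] where
  grm : ℤ → Submodule k X
  decomp : DirectSum.Decomposition grm
  act : N →ₗ[k] X →ₗ[k] X
  act_one : ∀ x : X, act E.one x = x
  act_mul : ∀ (r s : N) (x : X), act (E.mul r s) x = act r (act s x)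
  act_mem : ∀ {i j : ℤ} {r : N} {x : X}, r ∈ E.gr i → x ∈ grm j → act r x ∈ grm (i + j)
  dm : X →ₗ[k] X
  dm_mem : ∀ {i : ℤ} {x : X}, x ∈ grm i → dm x ∈ grm (i + 1)
  dm_sq : ∀ x : X, dm (dm x) = 0
  dm_act : ∀ {i : ℤ} {r : N}, r ∈ E.gr i → ∀ x : X,
    dm (act r x) = act (E.d r) x + ((-1 : k) ^ i) • act r (dm x)

/-- A left differential graded Poisson module structure on `X` over the differential
graded Poisson algebra `P`. -/
structure DGPModOn {M : Type u} [AddCommGroup M] [Module k M] (P : DGPAOn k M)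
    (X : Type u) [AddCommGroup X] [Module k X] where
  grm : ℤ → Submodule k X
  decomp : DirectSum.Decomposition grm
  act : M →ₗ[k] X →ₗ[k] X
  act_one : ∀ x : X, act P.one x = x
  act_mul : ∀ (a b : M) (x : X), act (P.mul a b) x = act a (act b x)
  act_mem : ∀ {i j : ℤ} {a : M} {x : X}, a ∈ P.gr i → x ∈ grm j → act a x ∈ grm (i + j)
  dm : X →ₗ[k] X
  dm_mem : ∀ {i : ℤ} {x : X}, x ∈ grm i → dm x ∈ grm (i + 1)
  dm_sq : ∀ x : X, dm (dm x) = 0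
  dm_act : ∀ {i : ℤ} {a : M}, a ∈ P.gr i → ∀ x : X,
    dm (act a x) = act (P.d a) x + ((-1 : k) ^ i) • act a (dm x)
  bact : M →ₗ[k] X →ₗ[k] X
  bact_mem : ∀ {i j : ℤ} {a : M} {x : X}, a ∈ P.gr i → x ∈ grm j → bact a x ∈ grm (i + j)
  bact_amod : ∀ {i j : ℤ} {a b : M}, a ∈ P.gr i → b ∈ P.gr j → ∀ x : X,
    bact a (act b x) = act (P.br a b) x + ((-1 : k) ^ (i * j)) • act b (bact a x)
  bact_mulact : ∀ {i j : ℤ} {a b : M}, a ∈ P.gr i → b ∈ P.gr j → ∀ x : X,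
    bact (P.mul a b) x = act a (bact b x) + ((-1 : k) ^ (i * j)) • act b (bact a x)
  bact_jacobi : ∀ {i j : ℤ} {a b : M}, a ∈ P.gr i → b ∈ P.gr j → ∀ x : X,
    bact a (bact b x) = bact (P.br a b) x + ((-1 : k) ^ (i * j)) • bact b (bact a x)
  dm_bact : ∀ {i : ℤ} {a : M}, a ∈ P.gr i → ∀ x : X,
    dm (bact a x) = bact (P.d a) x + ((-1 : k) ^ i) • bact a (dm x)

/-- A morphism of left differential graded modules. -/
def IsDGModHom {N X Y : Type u} [AddCommGroup N] [Module k N]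
    [AddCommGroup X] [Module k X] [AddCommGroup Y] [Module k Y]
    {E : DGAOn k N} (W : DGModOn E X) (W' : DGModOn E Y) (f : X →ₗ[k] Y) : Prop :=
  (∀ {n : ℤ} {x : X}, x ∈ W.grm n → f x ∈ W'.grm n) ∧
  (∀ x : X, f (W.dm x) = W'.dm (f x)) ∧
  (∀ (r : N) (x : X), f (W.act r x) = W'.act r (f x))

/-- A morphism of left differential graded Poisson modules. -/
def IsDGPModHom {M X Y : Type u} [AddCommGroup M] [Module k M]
    [AddCommGroup X] [Module k X] [AddCommGroup Y] [Module k Y]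
    {P : DGPAOn k M} (V : DGPModOn P X) (V' : DGPModOn P Y) (f : X →ₗ[k] Y) : Prop :=
  (∀ {n : ℤ} {x : X}, x ∈ V.grm n → f x ∈ V'.grm n) ∧
  (∀ x : X, f (V.dm x) = V'.dm (f x)) ∧
  (∀ (a : M) (x : X), f (V.act a x) = V'.act a (f x)) ∧
  (∀ (a : M) (x : X), f (V.bact a x) = V'.bact a (f x))

/-- The correspondence between a differential graded Poisson module structure over `P`
and a differential graded module structure over `A^e` on the same space. -/
def ModCorr {M X : Type u} [AddCommGroup M] [Module k M] [AddCommGroup X] [Module k X]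
    {P : DGPAOn k M} {E : DGAOn k (Env P)}
    (V : DGPModOn P X) (W : DGModOn E X) : Prop :=
  W.grm = V.grm ∧ W.dm = V.dm ∧
  (∀ (a : M) (x : X), W.act (mgen P a) x = V.act a x) ∧
  (∀ (a : M) (x : X), W.act (hgen P a) x = V.bact a x)

end ModuleDefs

section EnvProof

variable {k : Type u} [Field k] {M : Type u} [AddCommGroup M] [Module k M]

lemma mgen_def (P : DGPAOn k M) (a : M) : mgen P a =
    RingQuot.mkAlgHom k (EnvRel P) (TensorAlgebra.ι k ((a, 0) : M × M)) := rfl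

lemma hgen_def (P : DGPAOn k M) (a : M) : hgen P a =
    RingQuot.mkAlgHom k (EnvRel P) (TensorAlgebra.ι k ((0, a) : M × M)) := rfl

lemma mgen_one (P : DGPAOn k M) : mgen P P.one = 1 := by
  rw [mgen_def, RingQuot.mkAlgHom_rel k (EnvRel.relone (P := P)), map_one]

lemma mgen_mul (P : DGPAOn k M) (a b : M) : mgen P (P.mul a b) = mgen P a * mgen P b := by
  rw [mgen_def, RingQuot.mkAlgHom_rel k (EnvRel.relmul (P := P) a b), map_mul]; rfl

lemma hgen_mul (P : DGPAOn k M) {i j : ℤ} {a b : M} (ha : a ∈ P.gr i) (hb : b ∈ P.gr j) :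
    hgen P (P.mul a b) =
      mgen P a * hgen P b + ((-1 : k) ^ (i * j)) • (mgen P b * hgen P a) := by
  rw [hgen_def, RingQuot.mkAlgHom_rel k (EnvRel.relhmul (P := P) ha hb)]
  simp only [map_add, map_smul, map_mul]; rfl

lemma mgen_br (P : DGPAOn k M) {i j : ℤ} {a b : M} (ha : a ∈ P.gr i) (hb : b ∈ P.gr j) :
    mgen P (P.br a b) =
      hgen P a * mgen P b - ((-1 : k) ^ (i * j)) • (mgen P b * hgen P a) := by
  rw [mgen_def, RingQuot.mkAlgHom_rel k (EnvRel.relmbr (P := P) ha hb)]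
  simp only [map_sub, map_smul, map_mul]; rfl

lemma hgen_br (P : DGPAOn k M) {i j : ℤ} {a b : M} (ha : a ∈ P.gr i) (hb : b ∈ P.gr j) :
    hgen P (P.br a b) =
      hgen P a * hgen P b - ((-1 : k) ^ (i * j)) • (hgen P b * hgen P a) := by
  rw [hgen_def, RingQuot.mkAlgHom_rel k (EnvRel.relhbr (P := P) ha hb)]
  simp only [map_sub, map_smul, map_mul]; rfl

/-- Induction on homogeneous elements of a differential graded Poisson algebra. -/
lemma homog_induction (P : DGPAOn k M) {p : M → Prop} (h0 : p 0)
    (hh : ∀ (i : ℤ) (a : M), a ∈ P.gr i → p a) (hadd : ∀ a b, p a → p b → p (a + b)) (a : M) :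
    p a := by
  let _ := P.decomp
  exact DirectSum.Decomposition.inductionOn P.gr h0 (fun {i} a => hh i a a.2) hadd a

section Lift

/-- The universal property of `A^e` as an algebra. -/
lemma exists_envLift {B : Type*} [Ring B] [Algebra k B] (P : DGPAOn k M) (f g : M →ₗ[k] B)
    (h1 : f P.one = 1)
    (hm : ∀ {i j : ℤ} {a b : M}, a ∈ P.gr i → b ∈ P.gr j → f (P.mul a b) = f a * f b)
    (hhm : ∀ {i j : ℤ} {a b : M}, a ∈ P.gr i → b ∈ P.gr j →
      g (P.mul a b) = f a * g b + ((-1 : k) ^ (i * j)) • (f b * g a))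
    (hmb : ∀ {i j : ℤ} {a b : M}, a ∈ P.gr i → b ∈ P.gr j →
      f (P.br a b) = g a * f b - ((-1 : k) ^ (i * j)) • (f b * g a))
    (hhb : ∀ {i j : ℤ} {a b : M}, a ∈ P.gr i → b ∈ P.gr j →
      g (P.br a b) = g a * g b - ((-1 : k) ^ (i * j)) • (g b * g a)) :
    ∃ F : Env P →ₐ[k] B, (∀ a, F (mgen P a) = f a) ∧ (∀ a, F (hgen P a) = g a) := by
  have hm' : ∀ a b : M, f (P.mul a b) = f a * f b := by
    intro a b
    induction a using homog_induction P with
    | h0 => simp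
    | hadd a a' ha ha' => simp [ha, ha', add_mul]
    | hh i a ha =>
      induction b using homog_induction P with
      | h0 => simp
      | hadd a a' ha ha' => simp [ha, ha', mul_add]
      | hh j b hb => exact hm ha hb
  refine ⟨RingQuot.liftAlgHom k ⟨TensorAlgebra.lift k (f.coprod g), ?_⟩, ?_, ?_⟩
  · intro x y hxy
    cases hxy with
    | relone => simp [h1]
    | relmul a b => simp [hm']
    | relhmul ha hb => simp [hhm ha hb]
    | relmbr ha hb => simp [hmb ha hb]
    | relhbr ha hb => simp [hhb ha hb]
  · intro a
    rw [mgen_def, RingQuot.liftAlgHom_mkAlgHom_apply]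
    simp
  · intro a
    rw [hgen_def, RingQuot.liftAlgHom_mkAlgHom_apply]
    simp

/-- The universal property of `A^e` as an algebra, without subtraction in the target. -/
lemma exists_envLift' {B : Type*} [Semiring B] [Algebra k B] (P : DGPAOn k M) (f g : M →ₗ[k] B)
    (h1 : f P.one = 1)
    (hm : ∀ {i j : ℤ} {a b : M}, a ∈ P.gr i → b ∈ P.gr j → f (P.mul a b) = f a * f b)
    (hhm : ∀ {i j : ℤ} {a b : M}, a ∈ P.gr i → b ∈ P.gr j →
      g (P.mul a b) = f a * g b + ((-1 : k) ^ (i * j)) • (f b * g a))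
    (hmb : ∀ {i j : ℤ} {a b : M}, a ∈ P.gr i → b ∈ P.gr j →
      f (P.br a b) + ((-1 : k) ^ (i * j)) • (f b * g a) = g a * f b)
    (hhb : ∀ {i j : ℤ} {a b : M}, a ∈ P.gr i → b ∈ P.gr j →
      g (P.br a b) + ((-1 : k) ^ (i * j)) • (g b * g a) = g a * g b) :
    ∃ F : Env P →ₐ[k] B, (∀ a, F (mgen P a) = f a) ∧ (∀ a, F (hgen P a) = g a) := by
  letI r : Ring B := Algebra.semiringToRing k
  exact exists_envLift (B := B) P f g h1 hm hhm (fun ha hb => eq_sub_of_add_eq (hmb ha hb))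
    (fun ha hb => eq_sub_of_add_eq (hhb ha hb))

lemma env_ext {B : Type*} [Semiring B] [Algebra k B] (P : DGPAOn k M) {F G : Env P →ₐ[k] B} (hm : ∀ a, F (mgen P a) = G (mgen P a))
    (hh : ∀ a, F (hgen P a) = G (hgen P a)) : F = G := by
  apply RingQuot.ringQuot_ext'
  apply TensorAlgebra.hom_ext
  apply LinearMap.prod_ext
  · ext a; exact hm a
  · ext a; exact hh a

end Lift

/-- Words of a given degree in homogeneous generators. -/
inductive EnvWord (P : DGPAOn k M) : ℤ → Env P → Prop
  | one : EnvWord P 0 1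
  | mmul {i n : ℤ} {a : M} {x : Env P} (ha : a ∈ P.gr i) (hx : EnvWord P n x) :
      EnvWord P (i + n) (mgen P a * x)
  | hmul {i n : ℤ} {a : M} {x : Env P} (ha : a ∈ P.gr i) (hx : EnvWord P n x) :
      EnvWord P (i + n) (hgen P a * x)

lemma EnvWord.mul {P : DGPAOn k M} {i j : ℤ} {x y : Env P} (hx : EnvWord P i x)
    (hy : EnvWord P j y) : EnvWord P (i + j) (x * y) := by
  induction hx with
  | one => simpa using hy
  | mmul ha _ ih => rw [mul_assoc, add_assoc]; exact .mmul ha ih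
  | hmul ha _ ih => rw [mul_assoc, add_assoc]; exact .hmul ha ih

/-- The grading on `A^e`. -/
def envGr (P : DGPAOn k M) (n : ℤ) : Submodule k (Env P) :=
  Submodule.span k {x | EnvWord P n x}

lemma mgen_mem (P : DGPAOn k M) {i : ℤ} {a : M} (ha : a ∈ P.gr i) : mgen P a ∈ envGr P i := by
  have := EnvWord.mmul ha EnvWord.one
  rw [mul_one, add_zero] at this
  exact Submodule.subset_span this

lemma hgen_mem (P : DGPAOn k M) {i : ℤ} {a : M} (ha : a ∈ P.gr i) : hgen P a ∈ envGr P i := by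
  have := EnvWord.hmul ha EnvWord.one
  rw [mul_one, add_zero] at this
  exact Submodule.subset_span this

instance envGr_gradedMonoid (P : DGPAOn k M) : SetLike.GradedMonoid (envGr P) where
  one_mem := Submodule.subset_span EnvWord.one
  mul_mem := by
    intro i j x y hx hy
    have h := Submodule.mul_mem_mul hx hy
    rw [envGr, envGr, Submodule.span_mul_span] at h
    refine Submodule.span_mono ?_ h
    rintro _ ⟨x, hx, y, hy, rfl⟩
    exact EnvWord.mul hx hy

lemma envOf_congr (P : DGPAOn k M) {i j : ℤ} {x y : Env P} (hx : x ∈ envGr P i)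
    (hy : y ∈ envGr P j) (hij : i = j) (hxy : x = y) :
    DirectSum.of (fun n => envGr P n) i ⟨x, hx⟩ = DirectSum.of (fun n => envGr P n) j ⟨y, hy⟩ := by
  subst hij; subst hxy; rfl

/-- The graded version of a degree-preserving linear map from `A` to `A^e`. -/
lemma exists_grLift (P : DGPAOn k M) (f : M →ₗ[k] Env P)
    (hf : ∀ {i : ℤ} {a : M}, a ∈ P.gr i → f a ∈ envGr P i) :
    ∃ F : M →ₗ[k] DirectSum ℤ (fun n => envGr P n), ∀ {i : ℤ} {a : M} (ha : a ∈ P.gr i),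
      F a = DirectSum.of (fun n => envGr P n) i ⟨f a, hf ha⟩ := by
  let _ := P.decomp
  refine ⟨(DirectSum.toModule k ℤ _ fun i =>
    (DirectSum.lof k ℤ (fun n => envGr P n) i) ∘ₗ
      (f ∘ₗ (P.gr i).subtype).codRestrict (envGr P i) (fun a => hf a.2)) ∘ₗ
      (DirectSum.decomposeLinearEquiv P.gr).toLinearMap, ?_⟩
  intro i a ha
  simp only [LinearMap.comp_apply, LinearEquiv.coe_coe, DirectSum.decomposeLinearEquiv_apply]
  rw [DirectSum.decompose_of_mem P.gr ha, ← DirectSum.lof_eq_of k, DirectSum.toModule_lof]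
  rfl

lemma exists_envGraded (P : DGPAOn k M) : Nonempty (GradedAlgebra (envGr P)) := by
  obtain ⟨Fm, hFm⟩ := exists_grLift P (mgen P) (mgen_mem P)
  obtain ⟨Fh, hFh⟩ := exists_grLift P (hgen P) (hgen_mem P)
  have key : ∃ F : Env P →ₐ[k] DirectSum ℤ (fun n => envGr P n),
      (∀ a, F (mgen P a) = Fm a) ∧ (∀ a, F (hgen P a) = Fh a) := by
    apply exists_envLift' P Fm Fh
    · rw [hFm P.one_mem, DirectSum.one_def]
      exact envOf_congr P _ _ rfl (mgen_one P)
    · intro i j a b ha hb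
      rw [hFm ha, hFm hb, hFm (P.mul_mem ha hb), DirectSum.of_mul_of]
      exact envOf_congr P _ _ rfl (mgen_mul P a b)
    · intro i j a b ha hb
      have e := envOf_congr P (SetLike.mul_mem_graded (mgen_mem P hb) (hgen_mem P ha))
        (by rw [add_comm i j]; exact SetLike.mul_mem_graded (mgen_mem P hb) (hgen_mem P ha))
        (add_comm j i) rfl
      rw [hFm ha, hFh hb, hFh ha, hFm hb, hFh (P.mul_mem ha hb), DirectSum.of_mul_of,
        DirectSum.of_mul_of]
      refine Eq.trans ?_ (congrArg₂ (· + ·) rfl (congrArg _ e.symm))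
      simp only [← DirectSum.lof_eq_of k]
      rw [← map_smul, ← map_add]
      congr 1
      exact Subtype.ext (hgen_mul P ha hb)
    · intro i j a b ha hb
      have e := envOf_congr P (SetLike.mul_mem_graded (mgen_mem P hb) (hgen_mem P ha))
        (by rw [add_comm i j]; exact SetLike.mul_mem_graded (mgen_mem P hb) (hgen_mem P ha))
        (add_comm j i) rfl
      rw [hFh ha, hFm hb, hFm (P.br_mem ha hb), DirectSum.of_mul_of,
        DirectSum.of_mul_of]
      refine Eq.trans (congrArg₂ (· + ·) rfl (congrArg _ e)) ?_
      simp only [← DirectSum.lof_eq_of k]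
      rw [← map_smul, ← map_add]
      congr 1
      exact Subtype.ext (eq_sub_iff_add_eq.mp (mgen_br P ha hb))
    · intro i j a b ha hb
      have e := envOf_congr P (SetLike.mul_mem_graded (hgen_mem P hb) (hgen_mem P ha))
        (by rw [add_comm i j]; exact SetLike.mul_mem_graded (hgen_mem P hb) (hgen_mem P ha))
        (add_comm j i) rfl
      rw [hFh ha, hFh hb, hFh (P.br_mem ha hb), DirectSum.of_mul_of,
        DirectSum.of_mul_of]
      refine Eq.trans (congrArg₂ (· + ·) rfl (congrArg _ e)) ?_
      simp only [← DirectSum.lof_eq_of k]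
      rw [← map_smul, ← map_add]
      congr 1
      exact Subtype.ext (eq_sub_iff_add_eq.mp (hgen_br P ha hb))
  obtain ⟨F, hm, hh⟩ := key
  have hword : ∀ (i : ℤ) (x : Env P) (hx : EnvWord P i x),
      F x = DirectSum.of (fun n => envGr P n) i ⟨x, Submodule.subset_span hx⟩ := by
    intro i x hx
    induction hx with
    | one => rw [map_one, DirectSum.one_def]; rfl
    | mmul ha hx ih => rw [map_mul, hm, ih, hFm ha, DirectSum.of_mul_of]; rfl
    | hmul ha hx ih => rw [map_mul, hh, ih, hFh ha, DirectSum.of_mul_of]; rfl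
  refine ⟨GradedAlgebra.ofAlgHom (envGr P) F ?_ ?_⟩
  · apply env_ext P
    · intro a
      induction a using homog_induction P with
      | h0 => simp
      | hadd a b ha hb => simp only [map_add, ha, hb]
      | hh i a ha =>
        simp only [AlgHom.comp_apply, hm, hFm ha, AlgHom.id_apply]
        exact DirectSum.coeAlgHom_of (envGr P) i _
    · intro a
      induction a using homog_induction P with
      | h0 => simp
      | hadd a b ha hb => simp only [map_add, ha, hb]
      | hh i a ha =>
        simp only [AlgHom.comp_apply, hh, hFh ha, AlgHom.id_apply]
        exact DirectSum.coeAlgHom_of (envGr P) i _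
  · rintro i ⟨x, hx⟩
    change F x = _
    induction hx using Submodule.span_induction with
    | mem x hx => exact hword i x hx
    | zero => rw [map_zero]; exact (map_zero _).symm
    | add x y hx hy h1 h2 => rw [map_add, h1, h2, ← map_add]; rfl
    | smul c x hx h =>
      rw [map_smul, h, ← DirectSum.lof_eq_of k, ← DirectSum.lof_eq_of k, ← map_smul]; rfl

/-- The sign automorphism of the underlying graded space. -/
lemma exists_sign (P : DGPAOn k M) :
    ∃ s : M →ₗ[k] M, ∀ {i : ℤ} {a : M}, a ∈ P.gr i → s a = ((-1 : k) ^ i) • a := by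
  let _ := P.decomp
  refine ⟨(DirectSum.toModule k ℤ _ fun i => ((-1 : k) ^ i) • (P.gr i).subtype) ∘ₗ
      (DirectSum.decomposeLinearEquiv P.gr).toLinearMap, ?_⟩
  intro i a ha
  simp only [LinearMap.comp_apply, LinearEquiv.coe_coe, DirectSum.decomposeLinearEquiv_apply]
  rw [DirectSum.decompose_of_mem P.gr ha, ← DirectSum.lof_eq_of k, DirectSum.toModule_lof]
  rfl

/-- Upper triangular matrices built from three linear maps. -/
def triMap {B : Type*} [Ring B] [Algebra k B] (f g h : M →ₗ[k] B) :
    M →ₗ[k] Matrix (Fin 2) (Fin 2) B where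
  toFun a := !![f a, g a; 0, h a]
  map_add' a b := by ext i j; fin_cases i <;> fin_cases j <;> simp
  map_smul' c a := by ext i j; fin_cases i <;> fin_cases j <;> simp

lemma sgn_cases (i : ℤ) : (-1 : k) ^ i = 1 ∨ (-1 : k) ^ i = -1 := by
  rcases Int.even_or_odd i with h | h
  · exact Or.inl h.neg_one_zpow
  · exact Or.inr h.neg_one_zpow

lemma neg_one_zpow_add (i j : ℤ) : (-1 : k) ^ (i + j) = (-1 : k) ^ i * (-1 : k) ^ j :=
  zpow_add₀ (by simp) i j

lemma d_one (P : DGPAOn k M) : P.d P.one = 0 := by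
  have h := P.d_mul P.one_mem P.one_mem
  simpa [P.one_mul, P.mul_one] using h

lemma exists_triHom (P : DGPAOn k M) (s : M →ₗ[k] M)
    (hs : ∀ {i : ℤ} {a : M}, a ∈ P.gr i → s a = ((-1 : k) ^ i) • a) :
    ∃ F : Env P →ₐ[k] Matrix (Fin 2) (Fin 2) (Env P),
      (∀ a, F (mgen P a) = !![mgen P (s a), mgen P (P.d a); 0, mgen P a]) ∧
      (∀ a, F (hgen P a) = !![hgen P (s a), hgen P (P.d a); 0, hgen P a]) := by
  apply exists_envLift P (triMap (mgen P ∘ₗ s) (mgen P ∘ₗ P.d) (mgen P))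
    (triMap (hgen P ∘ₗ s) (hgen P ∘ₗ P.d) (hgen P))
  · ext i j
    fin_cases i <;> fin_cases j <;> simp [triMap, hs P.one_mem, d_one, mgen_one]
  · intro i j a b ha hb
    ext p q
    fin_cases p <;> fin_cases q <;>
      simp [triMap, hs ha, hs hb, hs (P.mul_mem ha hb), P.d_mul ha hb, mgen_mul,
        neg_one_zpow_add, smul_smul, Matrix.mul_apply, mul_comm, add_comm]
  · intro i j a b ha hb
    ext p q
    fin_cases p <;> fin_cases q <;>
      simp [triMap, hs ha, hs hb, hs (P.mul_mem ha hb), P.d_mul ha hb, hgen_mul P ha hb,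
        hgen_mul P (P.d_mem ha) hb, hgen_mul P ha (P.d_mem hb), mul_add, add_mul,
        neg_one_zpow_add, smul_smul, Matrix.mul_apply] <;>
    rcases sgn_cases (k := k) i with hi | hi <;> rcases sgn_cases (k := k) j with hj | hj <;>
      simp only [hi, hj] <;> module
  · intro i j a b ha hb
    ext p q
    fin_cases p <;> fin_cases q <;>
      simp [triMap, hs ha, hs hb, hs (P.br_mem ha hb), P.d_br ha hb, mgen_br P ha hb,
        mgen_br P (P.d_mem ha) hb, mgen_br P ha (P.d_mem hb), mul_add, add_mul,
        neg_one_zpow_add, smul_smul, Matrix.mul_apply] <;>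
    rcases sgn_cases (k := k) i with hi | hi <;> rcases sgn_cases (k := k) j with hj | hj <;>
      simp only [hi, hj] <;> module
  · intro i j a b ha hb
    ext p q
    fin_cases p <;> fin_cases q <;>
      simp [triMap, hs ha, hs hb, hs (P.br_mem ha hb), P.d_br ha hb, hgen_br P ha hb,
        hgen_br P (P.d_mem ha) hb, hgen_br P ha (P.d_mem hb), mul_add, add_mul,
        neg_one_zpow_add, smul_smul, Matrix.mul_apply] <;>
    rcases sgn_cases (k := k) i with hi | hi <;> rcases sgn_cases (k := k) j with hj | hj <;>
      simp only [hi, hj] <;> module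

/-- Existence of the differential on `A^e`. -/
lemma exists_envD (P : DGPAOn k M) : ∃ D : Env P →ₗ[k] Env P,
    (∀ a, D (mgen P a) = mgen P (P.d a)) ∧ (∀ a, D (hgen P a) = hgen P (P.d a)) ∧ D 1 = 0 ∧
    (∀ {i : ℤ} {x : Env P}, x ∈ envGr P i → ∀ y : Env P,
      D (x * y) = D x * y + ((-1 : k) ^ i) • (x * D y)) := by
  obtain ⟨s, hs⟩ := exists_sign P
  obtain ⟨F, hm, hh⟩ := exists_triHom P s hs
  let D : Env P →ₗ[k] Env P :=
    { toFun := fun x => F x 0 1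
      map_add' := by intro x y; simp
      map_smul' := by intro c x; simp }
  have hD : ∀ x, D x = F x 0 1 := fun x => rfl
  have h11 : ∀ {i : ℤ} {x : Env P}, EnvWord P i x →
      F x 1 1 = x ∧ F x 0 0 = ((-1 : k) ^ i) • x ∧ F x 1 0 = 0 := by
    intro i x hx
    induction hx with
    | one => simp
    | mmul ha hx ih =>
      simp [Matrix.mul_apply, hm, ih, hs ha, neg_one_zpow_add, smul_smul, mul_comm]
    | hmul ha hx ih =>
      simp [Matrix.mul_apply, hh, ih, hs ha, neg_one_zpow_add, smul_smul, mul_comm]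
  have h00 : ∀ {i : ℤ} {x : Env P}, x ∈ envGr P i → F x 0 0 = ((-1 : k) ^ i) • x := by
    intro i x hx
    induction hx using Submodule.span_induction with
    | mem x hx => exact (h11 hx).2.1
    | zero => simp
    | add x y hx hy h1 h2 => simp [h1, h2]
    | smul c x hx h => simp [h, smul_smul, mul_comm]
  obtain ⟨hG⟩ := exists_envGraded P
  have h1 : ∀ x : Env P, F x 1 1 = x := by
    intro x
    induction x using DirectSum.Decomposition.inductionOn (envGr P) with
    | zero => simp
    | add x y hx hy => simp [hx, hy]
    | @homogeneous i x =>
      obtain ⟨x, hx⟩ := x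
      change F x 1 1 = x
      induction hx using Submodule.span_induction with
      | mem x hx => exact (h11 hx).1
      | zero => simp
      | add x y hx hy h1 h2 => simp [h1, h2]
      | smul c x hx h => simp [h]
  refine ⟨D, ?_, ?_, ?_, ?_⟩
  · intro a; simp [hD, hm]
  · intro a; simp [hD, hh]
  · simp [hD]
  · intro i x hx y
    simp only [hD, map_mul, Matrix.mul_apply, Fin.sum_univ_two, h00 hx, h1]
    rw [smul_mul_assoc, add_comm]

lemma env_span_induction (P : DGPAOn k M) {p : Env P → Prop}
    (h0 : p 0) (hadd : ∀ x y, p x → p y → p (x + y)) (hsmul : ∀ (c : k) x, p x → p (c • x))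
    (hw : ∀ i x, EnvWord P i x → p x) (x : Env P) : p x := by
  obtain ⟨hG⟩ := exists_envGraded P
  induction x using DirectSum.Decomposition.inductionOn (envGr P) with
  | zero => exact h0
  | add x y hx hy => exact hadd _ _ hx hy
  | @homogeneous i x =>
    obtain ⟨x, hx⟩ := x
    change p x
    induction hx using Submodule.span_induction with
    | mem x hx => exact hw i x hx
    | zero => exact h0
    | add x y hx hy h1 h2 => exact hadd _ _ h1 h2
    | smul c x hx h => exact hsmul _ _ h

lemma exists_envDGA (P : DGPAOn k M) : ∃ E : DGAOn k (Env P), IsEnvDGA P E := by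
  obtain ⟨hG⟩ := exists_envGraded P
  obtain ⟨D, Dm, Dh, D1, Dmul⟩ := exists_envD P
  have hmem : ∀ {i : ℤ} {x : Env P}, x ∈ envGr P i → D x ∈ envGr P (i + 1) := by
    intro i x hx
    induction hx using Submodule.span_induction with
    | zero => simp
    | add x y hx hy h1 h2 => rw [map_add]; exact add_mem h1 h2
    | smul c x hx h => rw [map_smul]; exact Submodule.smul_mem _ _ h
    | mem x hx =>
      change EnvWord P _ x at hx
      induction hx with
      | one => rw [D1]; exact zero_mem _
      | @mmul i n a x ha hx ih =>
        rw [Dmul (mgen_mem P ha), Dm]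
        refine add_mem ?_ (Submodule.smul_mem _ _ ?_)
        · rw [add_right_comm]
          exact SetLike.mul_mem_graded (mgen_mem P (P.d_mem ha)) (Submodule.subset_span hx)
        · rw [add_assoc]
          exact SetLike.mul_mem_graded (mgen_mem P ha) ih
      | @hmul i n a x ha hx ih =>
        rw [Dmul (hgen_mem P ha), Dh]
        refine add_mem ?_ (Submodule.smul_mem _ _ ?_)
        · rw [add_right_comm]
          exact SetLike.mul_mem_graded (hgen_mem P (P.d_mem ha)) (Submodule.subset_span hx)
        · rw [add_assoc]
          exact SetLike.mul_mem_graded (hgen_mem P ha) ih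
  have hsq : ∀ x, D (D x) = 0 := by
    refine env_span_induction P (p := fun x => D (D x) = 0) ?_ ?_ ?_ ?_
    · simp
    · intro x y hx hy; simp [hx, hy]
    · intro c x hx; simp [hx]
    · intro i x hx
      induction hx with
      | one => simp [D1]
      | mmul ha hx ih =>
        rw [Dmul (mgen_mem P ha), Dm, map_add, map_smul, Dmul (mgen_mem P ha),
          Dmul (mgen_mem P (P.d_mem ha)), Dm, Dm, P.d_sq, ih, neg_one_zpow_add]
        simp
        module
      | hmul ha hx ih =>
        rw [Dmul (hgen_mem P ha), Dh, map_add, map_smul, Dmul (hgen_mem P ha),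
          Dmul (hgen_mem P (P.d_mem ha)), Dh, Dh, P.d_sq, ih, neg_one_zpow_add]
        simp
        module
  refine ⟨{ gr := envGr P
            decomp := hG.toDecomposition
            mul := LinearMap.mul k (Env P)
            one := 1
            one_mem := SetLike.GradedOne.one_mem
            mul_mem := fun ha hb => SetLike.mul_mem_graded ha hb
            mul_assoc := fun a b c => _root_.mul_assoc a b c
            one_mul := fun a => _root_.one_mul a
            mul_one := fun a => _root_.mul_one a
            d := D
            d_mem := hmem
            d_sq := hsq
            d_mul := fun {i j a b} ha _ => Dmul ha b }, ?_⟩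
  exact ⟨fun _ _ => rfl, rfl, mgen_mem P, hgen_mem P, Dm, Dh⟩

end EnvProof

/-- the map `∂` determined on the generators of `A^e` by `∂(m_a) = m_{d a}`
and `∂(h_a) = h_{d a}` and the graded Leibniz rule is a well-defined differential on
`A^e` with `∂² = 0`, so that `(A^e, ∂)` is a differential graded algebra. -/
theorem stmt_6 (k : Type u) [Field k] (M : Type u) [AddCommGroup M] [Module k M]
    (P : DGPAOn k M) :
    ∃ E : DGAOn k (Env P), IsEnvDGA P E := by
  exact exists_envDGA P

end DGPaper

end
end

section
/- Let A be a differential graded Poisson algebra over a field k. In the smash product A # U(A) (a differential graded algebra since A is a left U(A)-module differential graded algebra), the two-sided ideal generated by the elements 1#(ab) - a#b - (-1)^{|a||b|} b#a, for all homogeneous a,b (taken in A on the left of # and in its copy 𝔸 ⊆ U(A) on the right of #), is a differential graded ideal; consequently the quotient A^E := (A # U(A))/(1#(ab) - a#b - (-1)^{|a||b|} b#a) is a differential graded algebra. -/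
open scoped TensorProduct

noncomputable section

namespace DGPaper

universe u

section Aux

variable {k : Type u} [Field k] {N : Type u} [AddCommGroup N] [Module k N]

theorem gr_induction (gr : ℤ → Submodule k N) (dec : DirectSum.Decomposition gr)
    (J : Submodule k N) (h : ∀ n, gr n ≤ J) (x : N) : x ∈ J := by
  letI := dec
  have h1 : (⨆ n, gr n) = ⊤ :=
    (DirectSum.Decomposition.isInternal gr).submodule_iSup_eq_top
  have h2 : (⨆ n, gr n) ≤ J := iSup_le h
  rw [h1] at h2
  exact h2 trivial

/-- Explicit generators of the two-sided ideal generated by `T`. -/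
def idealSpan (S : DGAOn k N) (T : Set N) : Submodule k N :=
  Submodule.span k {z | ∃ (i j : ℤ) (x y t : N), x ∈ S.gr i ∧ y ∈ S.gr j ∧ t ∈ T ∧
    z = S.mul (S.mul x t) y}

theorem idealGen_subset (S : DGAOn k N) (T : Set N) {t : N} (ht : t ∈ T) :
    t ∈ idealGen S T := by
  simp only [idealGen, Submodule.mem_sInf, Set.mem_ofPred_eq]
  intro I hI
  exact hI.1 ht

theorem idealGen_mul (S : DGAOn k N) (T : Set N) {x : N} (hx : x ∈ idealGen S T) (y : N) :
    S.mul x y ∈ idealGen S T ∧ S.mul y x ∈ idealGen S T := by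
  simp only [idealGen, Submodule.mem_sInf, Set.mem_ofPred_eq] at hx ⊢
  exact ⟨fun I hI => (hI.2 x (hx I hI) y).1, fun I hI => (hI.2 x (hx I hI) y).2⟩

theorem idealGen_eq (S : DGAOn k N) (T : Set N) : idealGen S T = idealSpan S T := by
  apply le_antisymm
  · apply sInf_le
    refine ⟨?_, ?_⟩
    · intro t ht
      refine Submodule.subset_span ⟨0, 0, S.one, S.one, t, S.one_mem, S.one_mem, ht, ?_⟩
      rw [S.one_mul, S.mul_one]
    · intro x hx y
      constructor
      · refine gr_induction S.gr S.decomp ((idealSpan S T).comap (S.mul x)) ?_ y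
        intro n y hy
        have : idealSpan S T ≤ (idealSpan S T).comap (S.mul.flip y) := by
          apply Submodule.span_le.2
          rintro _ ⟨i, j, a, b, t, ha, hb, ht, rfl⟩
          refine Submodule.subset_span ⟨i, j + n, a, S.mul b y, t, ha, S.mul_mem hb hy, ht, ?_⟩
          simp [S.mul_assoc]
        exact this hx
      · refine gr_induction S.gr S.decomp ((idealSpan S T).comap (S.mul.flip x)) ?_ y
        intro n y hy
        have : idealSpan S T ≤ (idealSpan S T).comap (S.mul y) := by
          apply Submodule.span_le.2
          rintro _ ⟨i, j, a, b, t, ha, hb, ht, rfl⟩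
          refine Submodule.subset_span ⟨n + i, j, S.mul y a, b, t, S.mul_mem hy ha, hb, ht, ?_⟩
          simp [S.mul_assoc]
        exact this hx
  · apply Submodule.span_le.2
    rintro _ ⟨i, j, x, y, t, hx, hy, ht, rfl⟩
    exact (idealGen_mul S T (idealGen_mul S T (idealGen_subset S T ht) x).2 y).1

theorem idealGen_d (S : DGAOn k N) (T : Set N) (hT : ∀ t ∈ T, ∃ n, t ∈ S.gr n)
    (hd : ∀ t ∈ T, S.d t ∈ idealGen S T) (x : N) (hx : x ∈ idealGen S T) :
    S.d x ∈ idealGen S T := by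
  have : idealSpan S T ≤ (idealGen S T).comap S.d := by
    apply Submodule.span_le.2
    rintro _ ⟨i, j, x, y, t, hx, hy, ht, rfl⟩
    obtain ⟨n, hn⟩ := hT t ht
    have h0 := idealGen_subset S T ht
    simp only [Submodule.comap_coe, Set.mem_preimage, SetLike.mem_coe]
    rw [S.d_mul (S.mul_mem hx hn) hy, S.d_mul hx hn]
    refine Submodule.add_mem _ (idealGen_mul S T (Submodule.add_mem _ ?_ ?_) y).1
      (Submodule.smul_mem _ _ ?_)
    · exact (idealGen_mul S T h0 _).2
    · exact Submodule.smul_mem _ _ (idealGen_mul S T (hd t ht) _).2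
    · exact (idealGen_mul S T (idealGen_mul S T h0 _).2 _).1
  rw [idealGen_eq] at hx
  exact this hx

theorem idealGen_homog (S : DGAOn k N) (T : Set N) (hT : ∀ t ∈ T, ∃ n, t ∈ S.gr n)
    (x : N) (hx : x ∈ idealGen S T) (n : ℤ) :
    letI := S.decomp
    ((DirectSum.decompose S.gr x n : S.gr n) : N) ∈ idealGen S T := by
  letI := S.decomp
  have : idealSpan S T ≤ (idealGen S T).comap ((S.gr n).subtype ∘ₗ
      DirectSum.component k ℤ (fun n => S.gr n) n ∘ₗ
      (DirectSum.decomposeLinearEquiv S.gr).toLinearMap) := by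
    apply Submodule.span_le.2
    rintro z ⟨i, j, x, y, t, hx, hy, ht, rfl⟩
    obtain ⟨m, hm⟩ := hT t ht
    have h0 := (idealGen_mul S T (idealGen_mul S T (idealGen_subset S T ht) x).2 y).1
    have h1 := S.mul_mem (S.mul_mem hx hm) hy
    change ((DirectSum.decompose S.gr (S.mul (S.mul x t) y) n : S.gr n) : N) ∈ idealGen S T
    rw [DirectSum.decompose_of_mem S.gr h1, DirectSum.coe_of_apply]
    split_ifs
    · exact h0
    · exact Submodule.zero_mem _
  rw [idealGen_eq] at hx
  exact this hx

/-- The induced grading on a quotient. -/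
def quotGr (gr : ℤ → Submodule k N) (I : Submodule k N) (n : ℤ) : Submodule k (N ⧸ I) :=
  (gr n).map I.mkQ

/-- The map from a graded piece to the corresponding graded piece of the quotient. -/
def quotGrMap (gr : ℤ → Submodule k N) (I : Submodule k N) (n : ℤ) :
    gr n →ₗ[k] quotGr gr I n :=
  I.mkQ.submoduleMap (gr n)

/-- The decomposition map, before passing to the quotient. -/
def preDec (gr : ℤ → Submodule k N) (dec : DirectSum.Decomposition gr) (I : Submodule k N) :
    N →ₗ[k] DirectSum ℤ (fun n => quotGr gr I n) :=
  (DirectSum.lmap (quotGrMap gr I)) ∘ₗ (DirectSum.decomposeLinearEquiv gr).toLinearMap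

theorem preDec_ker (gr : ℤ → Submodule k N) (dec : DirectSum.Decomposition gr)
    (I : Submodule k N)
    (hI : ∀ x ∈ I, ∀ n, ((DirectSum.decompose gr x n : gr n) : N) ∈ I) :
    I ≤ LinearMap.ker (preDec gr dec I) := by
  intro x hx
  rw [LinearMap.mem_ker]
  refine DFinsupp.ext fun n => Subtype.ext ?_
  change I.mkQ ((DirectSum.decompose gr x n : gr n) : N) = 0
  simpa using hI x hx n

theorem preDec_of (gr : ℤ → Submodule k N) (dec : DirectSum.Decomposition gr)
    (I : Submodule k N) (n : ℤ) (x : gr n) :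
    preDec gr dec I x = DirectSum.lof k ℤ (fun n => quotGr gr I n) n (quotGrMap gr I n x) := by
  change DirectSum.lmap (quotGrMap gr I) (DirectSum.decompose gr (x : N)) = _
  rw [DirectSum.decompose_coe]
  exact DirectSum.lmap_lof (R := k) (quotGrMap gr I) n x

theorem preDec_congr (gr : ℤ → Submodule k N) (dec : DirectSum.Decomposition gr)
    (I : Submodule k N)
    (hI : ∀ x ∈ I, ∀ n, ((DirectSum.decompose gr x n : gr n) : N) ∈ I) (x y : N)
    (h : I.mkQ x = I.mkQ y) : preDec gr dec I x = preDec gr dec I y := by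
  have h1 : x - y ∈ I := (Submodule.Quotient.eq I).1 h
  have h2 : preDec gr dec I (x - y) = 0 := preDec_ker gr dec I hI h1
  have h3 : x = y + (x - y) := by abel
  rw [h3, map_add, h2, add_zero]

theorem preDec_left (gr : ℤ → Submodule k N) (dec : DirectSum.Decomposition gr)
    (I : Submodule k N) (x : N) :
    DirectSum.coeLinearMap (quotGr gr I) (preDec gr dec I x) = I.mkQ x := by
  refine gr_induction gr dec (LinearMap.eqLocus
    (DirectSum.coeLinearMap (quotGr gr I) ∘ₗ preDec gr dec I) I.mkQ) ?_ x
  intro n x hx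
  rw [LinearMap.mem_eqLocus, LinearMap.comp_apply]
  rw [preDec_of gr dec I n ⟨x, hx⟩, DirectSum.coeLinearMap_lof]
  rfl

theorem preDec_right (gr : ℤ → Submodule k N) (dec : DirectSum.Decomposition gr)
    (I : Submodule k N)
    (hI : ∀ x ∈ I, ∀ n, ((DirectSum.decompose gr x n : gr n) : N) ∈ I)
    (z : DirectSum ℤ (fun n => quotGr gr I n)) :
    ∀ x : N, I.mkQ x = DirectSum.coeLinearMap (quotGr gr I) z → preDec gr dec I x = z := by
  induction z using DirectSum.induction_on with
  | zero =>
    intro x hx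
    rw [preDec_congr gr dec I hI x 0 (by rw [hx, map_zero, map_zero]), map_zero]
  | of n y =>
    intro x hx
    obtain ⟨_, y, hy, rfl⟩ := y
    rw [DirectSum.coeLinearMap_of] at hx
    rw [preDec_congr gr dec I hI x y hx]
    exact preDec_of gr dec I n ⟨y, hy⟩
  | add z w hz hw =>
    intro x hx
    obtain ⟨a, ha⟩ := I.mkQ_surjective (DirectSum.coeLinearMap (quotGr gr I) z)
    obtain ⟨b, hb⟩ := I.mkQ_surjective (DirectSum.coeLinearMap (quotGr gr I) w)
    rw [preDec_congr gr dec I hI x (a + b) (by rw [hx, map_add, map_add, ha, hb]), map_add,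
      hz a ha, hw b hb]

/-- The decomposition induced on a quotient by a homogeneous submodule. -/
@[reducible]
def quotDecomp (gr : ℤ → Submodule k N) (dec : DirectSum.Decomposition gr)
    (I : Submodule k N)
    (hI : ∀ x ∈ I, ∀ n, ((DirectSum.decompose gr x n : gr n) : N) ∈ I) :
    DirectSum.Decomposition (quotGr gr I) where
  decompose' q := preDec gr dec I (Function.surjInv I.mkQ_surjective q)
  left_inv q := (preDec_left gr dec I _).trans (Function.surjInv_eq I.mkQ_surjective q)
  right_inv z := preDec_right gr dec I hI z _ (Function.surjInv_eq I.mkQ_surjective _)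

/-- The quotient differential graded algebra. -/
theorem exists_quot (S : DGAOn k N) (I : Submodule k N)
    (hm : ∀ x ∈ I, ∀ y : N, S.mul x y ∈ I ∧ S.mul y x ∈ I)
    (hd : ∀ x ∈ I, S.d x ∈ I)
    (hI : letI := S.decomp
      ∀ x ∈ I, ∀ n, ((DirectSum.decompose S.gr x n : S.gr n) : N) ∈ I) :
    ∃ R : DGAOn k (N ⧸ I), IsQuotDGA S I R := by
  let f : N →ₗ[k] (N ⧸ I) →ₗ[k] (N ⧸ I) :=
    { toFun := fun x => I.mapQ I (S.mul x) (fun y hy => (hm y hy x).2)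
      map_add' := by
        intro x y
        apply Submodule.linearMap_qext
        ext z
        simp
      map_smul' := by
        intro x y
        apply Submodule.linearMap_qext
        ext z
        simp }
  have hf : I ≤ LinearMap.ker f := by
    intro x hx
    rw [LinearMap.mem_ker]
    apply Submodule.linearMap_qext
    ext z
    simpa [f] using (hm x hx z).1
  let mul' : (N ⧸ I) →ₗ[k] (N ⧸ I) →ₗ[k] (N ⧸ I) := I.liftQ f hf
  have hmul : ∀ x y, mul' (I.mkQ x) (I.mkQ y) = I.mkQ (S.mul x y) := fun x y => rfl
  let d' : (N ⧸ I) →ₗ[k] (N ⧸ I) := I.mapQ I S.d hd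
  have hd' : ∀ x, d' (I.mkQ x) = I.mkQ (S.d x) := fun x => rfl
  have hs : Function.Surjective I.mkQ := I.mkQ_surjective
  refine ⟨{
    gr := quotGr S.gr I
    decomp := quotDecomp S.gr S.decomp I hI
    mul := mul'
    one := I.mkQ S.one
    one_mem := Submodule.mem_map_of_mem S.one_mem
    mul_mem := ?_
    mul_assoc := ?_
    one_mul := ?_
    mul_one := ?_
    d := d'
    d_mem := ?_
    d_sq := ?_
    d_mul := ?_ }, fun n => rfl, rfl, hmul, hd'⟩
  · rintro i j _ _ ⟨a, ha, rfl⟩ ⟨b, hb, rfl⟩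
    rw [hmul]
    exact Submodule.mem_map_of_mem (S.mul_mem ha hb)
  · intro a b c
    obtain ⟨a, rfl⟩ := hs a
    obtain ⟨b, rfl⟩ := hs b
    obtain ⟨c, rfl⟩ := hs c
    simp only [hmul, S.mul_assoc]
  · intro a
    obtain ⟨a, rfl⟩ := hs a
    rw [hmul, S.one_mul]
  · intro a
    obtain ⟨a, rfl⟩ := hs a
    rw [hmul, S.mul_one]
  · rintro i _ ⟨a, ha, rfl⟩
    rw [hd']
    exact Submodule.mem_map_of_mem (S.d_mem ha)
  · intro a
    obtain ⟨a, rfl⟩ := hs a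
    rw [hd', hd', S.d_sq, map_zero]
  · rintro i j _ _ ⟨a, ha, rfl⟩ ⟨b, hb, rfl⟩
    rw [hmul, hd', hd', hd', S.d_mul ha hb, map_add, map_smul, hmul, hmul]

theorem neg_one_zpow_sq (i : ℤ) : ((-1 : k) ^ i) * ((-1 : k) ^ i) = 1 := by
  rw [← mul_zpow]
  simp

end Aux

/-- in the smash product `A # U(A)`, the two-sided ideal generated by the
elements `1#(ab) - a#b - (-1)^{|a||b|} b#a` is a differential ideal, and consequently the
quotient `A^E` carries a differential graded algebra structure. -/
theorem stmt_8 (k : Type u) [Field k] (M : Type u) [AddCommGroup M] [Module k M]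
    (P : DGPAOn k M)
    (EU : DGAOn k (ULie P.toLie)) (hEU : IsULieDGA P.toLie EU)
    (S : DGAOn k (M ⊗[k] ULie P.toLie)) (hS : IsSmash P EU S) :
    (∀ x ∈ idealGen S (smashGens P), S.d x ∈ idealGen S (smashGens P)) ∧
    ∃ R : DGAOn k ((M ⊗[k] ULie P.toLie) ⧸ idealGen S (smashGens P)),
      IsQuotDGA S (idealGen S (smashGens P)) R := by
  obtain ⟨-, -, hU3, hU4⟩ := hEU
  obtain ⟨-, -, -, -, -, hgr, hSd⟩ := hS
  have hone : P.d P.one = 0 := by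
    have h := P.d_mul P.one_mem P.one_mem
    rw [P.one_mul, P.mul_one, P.one_mul] at h
    simpa using h
  have hT : ∀ t ∈ smashGens P, ∃ n, t ∈ S.gr n := by
    rintro _ ⟨i, j, a, b, ha, hb, rfl⟩
    refine ⟨i + j, Submodule.sub_mem _ (Submodule.sub_mem _ ?_ ?_) (Submodule.smul_mem _ _ ?_)⟩
    · have := hgr P.one_mem (hU3 (P.mul_mem ha hb))
      rwa [zero_add] at this
    · exact hgr ha (hU3 hb)
    · rw [add_comm]
      exact hgr hb (hU3 ha)
  have hd : ∀ t ∈ smashGens P, S.d t ∈ idealGen S (smashGens P) := by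
    rintro _ ⟨i, j, a, b, ha, hb, rfl⟩
    have h1 := idealGen_subset S (smashGens P)
      ⟨i + 1, j, P.d a, b, P.d_mem ha, hb, rfl⟩
    have h2 := idealGen_subset S (smashGens P)
      ⟨i, j + 1, a, P.d b, ha, P.d_mem hb, rfl⟩
    have h3 := Submodule.add_mem _ h1 (Submodule.smul_mem _ ((-1 : k) ^ i) h2)
    convert h3 using 1
    have hne : (-1 : k) ≠ 0 := by simp
    have e0 : (-1 : k) ^ ((i + 1) * j) = (-1 : k) ^ (i * j) * (-1 : k) ^ j := by
      rw [← zpow_add₀ hne]; ring_nf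
    have e1 : (-1 : k) ^ (i * (j + 1)) = (-1 : k) ^ (i * j) * (-1 : k) ^ i := by
      rw [← zpow_add₀ hne]; ring_nf
    have e2 := neg_one_zpow_sq (k := k) i
    have q1 : EU.d (uGen P.toLie (P.mul a b)) = uGen P.toLie (P.mul (P.d a) b) +
        ((-1 : k) ^ i) • uGen P.toLie (P.mul a (P.d b)) := by
      rw [hU4]
      change uGen P.toLie (P.d _) = _
      rw [P.d_mul ha hb, map_add, map_smul]
    have q2 : ∀ c, EU.d (uGen P.toLie c) = uGen P.toLie (P.d c) := hU4
    rw [map_sub, map_sub, map_smul, hSd P.one_mem, hSd ha, hSd hb, q1, q2, q2, hone, e0, e1]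
    simp only [TensorProduct.zero_tmul, TensorProduct.tmul_add, TensorProduct.tmul_smul,
      zpow_zero, _root_.one_mul, one_smul, zero_add, smul_add, smul_sub, smul_smul]
    have e3 : (-1 : k) ^ i * ((-1 : k) ^ (i * j) * (-1 : k) ^ i) = (-1 : k) ^ (i * j) := by
      linear_combination (-1 : k) ^ (i * j) * e2
    rw [e3]
    abel
  have hdI := idealGen_d S _ hT hd
  exact ⟨hdI, exists_quot S _ (fun x hx y => idealGen_mul S _ hx y) hdI
    (fun x hx n => idealGen_homog S _ hT x hx n)⟩

end DGPaper

end
end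

section
/- Let (A, {,}_A, d) be a differential graded Poisson algebra over a field k and (M, {,}_M, ∂) a left differential graded Poisson module over A. Then M is a left differential graded module over the differential graded algebra A^e under the action determined by m_a · x := ax and h_a · x := {a,x}_M for homogeneous a ∈ A, x ∈ M; in particular this action respects all defining relations of A^e and satisfies ∂(u·x) = ∂_{A^e}(u)·x + (-1)^{|u|}u·∂(x). -/
open scoped TensorProduct

noncomputable section

namespace DGPaper

universe u

section Helpers

variable {k : Type u} [Field k] {M X : Type u}
    [AddCommGroup M] [Module k M] [AddCommGroup X] [Module k X]

/-- The action of the tensor algebra on a Poisson module. -/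
def tAct {P : DGPAOn k M} (V : DGPModOn P X) :
    TensorAlgebra k (M × M) →ₐ[k] Module.End k X :=
  TensorAlgebra.lift k (LinearMap.coprod (V.act : M →ₗ[k] Module.End k X)
    (V.bact : M →ₗ[k] Module.End k X))

theorem tAct_ι {P : DGPAOn k M} (V : DGPModOn P X) (a b : M) (x : X) :
    tAct V (TensorAlgebra.ι k ((a, b) : M × M)) x = V.act a x + V.bact b x := by
  simp [tAct]

/-- The action respects all the defining relations of `A^e`. -/
theorem tAct_rel {P : DGPAOn k M} (V : DGPModOn P X)
    ⦃s t : TensorAlgebra k (M × M)⦄ (h : EnvRel P s t) : tAct V s = tAct V t := by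
  cases h with
  | relone =>
    ext x
    simp [tAct_ι, V.act_one]
  | relmul a b =>
    ext x
    simp [tAct_ι, V.act_mul]
  | relhmul ha hb =>
    ext x
    simp [tAct_ι, V.bact_mulact ha hb]
  | relmbr ha hb =>
    ext x
    simp [tAct_ι, V.bact_amod ha hb]
  | relhbr ha hb =>
    ext x
    simp [tAct_ι, V.bact_jacobi ha hb]

/-- The action of `A^e` on a Poisson module. -/
def eAct {P : DGPAOn k M} (V : DGPModOn P X) : Env P →ₐ[k] Module.End k X :=
  RingQuot.liftAlgHom k ⟨tAct V, tAct_rel V⟩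

theorem eAct_mgen {P : DGPAOn k M} (V : DGPModOn P X) (a : M) (x : X) :
    eAct V (mgen P a) x = V.act a x := by
  simp [eAct, mgen, tAct_ι]

theorem eAct_hgen {P : DGPAOn k M} (V : DGPModOn P X) (a : M) (x : X) :
    eAct V (hgen P a) x = V.bact a x := by
  simp [eAct, hgen, tAct_ι]

/-- The elements of `A^e` of degree `i` which act with degree `i` and satisfy the
graded Leibniz rule. -/
def goodSub {P : DGPAOn k M} (E : DGAOn k (Env P)) (V : DGPModOn P X) (i : ℤ) :
    Submodule k (Env P) where
  carrier := {r | r ∈ E.gr i ∧ (∀ (j : ℤ) (x : X), x ∈ V.grm j → eAct V r x ∈ V.grm (i + j)) ∧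
    ∀ x : X, V.dm (eAct V r x) = eAct V (E.d r) x + ((-1 : k) ^ i) • eAct V r (V.dm x)}
  zero_mem' := by
    refine ⟨Submodule.zero_mem _, fun j x _ => ?_, fun x => ?_⟩
    · simp
    · simp
  add_mem' := by
    rintro r s ⟨hr1, hr2, hr3⟩ ⟨hs1, hs2, hs3⟩
    refine ⟨Submodule.add_mem _ hr1 hs1, fun j x hx => ?_, fun x => ?_⟩
    · rw [map_add, LinearMap.add_apply]
      exact Submodule.add_mem _ (hr2 j x hx) (hs2 j x hx)
    · simp only [map_add, LinearMap.add_apply, hr3, hs3, smul_add]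
      abel
  smul_mem' := by
    rintro c r ⟨hr1, hr2, hr3⟩
    refine ⟨Submodule.smul_mem _ c hr1, fun j x hx => ?_, fun x => ?_⟩
    · rw [map_smul, LinearMap.smul_apply]
      exact Submodule.smul_mem _ c (hr2 j x hx)
    · simp only [map_smul, LinearMap.smul_apply, hr3, smul_add]
      rw [smul_comm c]

theorem goodSub_mul {P : DGPAOn k M} {E : DGAOn k (Env P)} (hE : IsEnvDGA P E)
    (V : DGPModOn P X) {i j : ℤ} {r s : Env P} (hr : r ∈ goodSub E V i)
    (hs : s ∈ goodSub E V j) : r * s ∈ goodSub E V (i + j) := by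
  obtain ⟨hr1, hr2, hr3⟩ := hr
  obtain ⟨hs1, hs2, hs3⟩ := hs
  have hm := hE.1
  refine ⟨?_, fun l x hx => ?_, fun x => ?_⟩
  · rw [← hm]
    exact E.mul_mem hr1 hs1
  · rw [map_mul, Module.End.mul_apply, add_assoc]
    exact hr2 _ _ (hs2 _ _ hx)
  · have hd : E.d (r * s) = E.d r * s + ((-1 : k) ^ i) • (r * E.d s) := by
      rw [← hm r s, E.d_mul hr1 hs1, hm, hm]
    rw [hd]
    simp only [map_add, map_smul, map_mul, LinearMap.add_apply, LinearMap.smul_apply,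
      Module.End.mul_apply, hr3, hs3, smul_add]
    rw [zpow_add₀ (by simp : (-1 : k) ≠ 0), mul_smul, add_assoc]

theorem goodSub_one {P : DGPAOn k M} {E : DGAOn k (Env P)} (hE : IsEnvDGA P E)
    (V : DGPModOn P X) : (1 : Env P) ∈ goodSub E V 0 := by
  have h1 : (1 : Env P) ∈ E.gr 0 := hE.2.1 ▸ E.one_mem
  have hd : E.d (1 : Env P) = 0 := by
    have h := E.d_mul h1 h1
    simpa [hE.1] using h
  refine ⟨h1, fun j x hx => ?_, fun x => ?_⟩
  · simpa using hx
  · simp [hd]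

theorem goodSub_mgen {P : DGPAOn k M} {E : DGAOn k (Env P)} (hE : IsEnvDGA P E)
    (V : DGPModOn P X) {i : ℤ} {a : M} (ha : a ∈ P.gr i) : mgen P a ∈ goodSub E V i := by
  refine ⟨hE.2.2.1 ha, fun j x hx => ?_, fun x => ?_⟩
  · rw [eAct_mgen]
    exact V.act_mem ha hx
  · rw [hE.2.2.2.2.1, eAct_mgen, eAct_mgen, eAct_mgen]
    exact V.dm_act ha x

theorem goodSub_hgen {P : DGPAOn k M} {E : DGAOn k (Env P)} (hE : IsEnvDGA P E)
    (V : DGPModOn P X) {i : ℤ} {a : M} (ha : a ∈ P.gr i) : hgen P a ∈ goodSub E V i := by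
  refine ⟨hE.2.2.2.1 ha, fun j x hx => ?_, fun x => ?_⟩
  · rw [eAct_hgen]
    exact V.bact_mem ha hx
  · rw [hE.2.2.2.2.2, eAct_hgen, eAct_hgen, eAct_hgen]
    exact V.dm_bact ha x

theorem mem_iSup_gr (P : DGPAOn k M) (a : M) : a ∈ ⨆ i, P.gr i := by
  letI := P.decomp
  rw [(DirectSum.Decomposition.isInternal P.gr).submodule_iSup_eq_top]
  trivial

theorem mem_iSup_goodSub {P : DGPAOn k M} {E : DGAOn k (Env P)} (hE : IsEnvDGA P E)
    (V : DGPModOn P X) (r : Env P) : r ∈ ⨆ i, goodSub E V i := by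
  have hle : ∀ i, goodSub E V i ≤ ⨆ i, goodSub E V i := fun i => le_iSup (goodSub E V) i
  have hmg : ∀ a : M, mgen P a ∈ ⨆ i, goodSub E V i := by
    intro a
    have h : (⨆ i, P.gr i) ≤ (⨆ i, goodSub E V i).comap (mgen P) :=
      iSup_le fun i b hb => hle i (goodSub_mgen hE V hb)
    exact h (mem_iSup_gr P a)
  have hhg : ∀ a : M, hgen P a ∈ ⨆ i, goodSub E V i := by
    intro a
    have h : (⨆ i, P.gr i) ≤ (⨆ i, goodSub E V i).comap (hgen P) :=
      iSup_le fun i b hb => hle i (goodSub_hgen hE V hb)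
    exact h (mem_iSup_gr P a)
  have hmul : ∀ r s : Env P, r ∈ (⨆ i, goodSub E V i) → s ∈ (⨆ i, goodSub E V i) →
      r * s ∈ ⨆ i, goodSub E V i := by
    intro r s hr hs
    have h1 : (⨆ i, goodSub E V i) ≤
        (⨆ i, goodSub E V i).comap (LinearMap.mulRight k s) := by
      refine iSup_le fun i r hr => ?_
      have h2 : (⨆ i, goodSub E V i) ≤
          (⨆ i, goodSub E V i).comap (LinearMap.mulLeft k r) :=
        iSup_le fun j s hs => hle (i + j) (goodSub_mul hE V hr hs)
      exact h2 hs
    exact h1 hr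
  obtain ⟨t, rfl⟩ := RingQuot.mkAlgHom_surjective k (EnvRel P) r
  induction t using TensorAlgebra.induction with
  | algebraMap c =>
    rw [AlgHom.commutes, Algebra.algebraMap_eq_smul_one]
    exact Submodule.smul_mem _ c (hle 0 (goodSub_one hE V))
  | ι z =>
    have hz : RingQuot.mkAlgHom k (EnvRel P) (TensorAlgebra.ι k z) =
        mgen P z.1 + hgen P z.2 := by
      simp [mgen, hgen, ← map_add]
    rw [hz]
    exact Submodule.add_mem _ (hmg _) (hhg _)
  | mul a b ha hb =>
    rw [map_mul]
    exact hmul _ _ ha hb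
  | add a b ha hb =>
    rw [map_add]
    exact Submodule.add_mem _ ha hb

theorem mem_goodSub {P : DGPAOn k M} {E : DGAOn k (Env P)} (hE : IsEnvDGA P E)
    (V : DGPModOn P X) {i : ℤ} {r : Env P} (hr : r ∈ E.gr i) : r ∈ goodSub E V i := by
  letI := E.decomp
  have key : ∀ i : ℤ, (DirectSum.decompose E.gr r i : Env P) ∈ goodSub E V i := by
    refine Submodule.iSup_induction (goodSub E V)
      (motive := fun r => ∀ i : ℤ, (DirectSum.decompose E.gr r i : Env P) ∈ goodSub E V i)
      (mem_iSup_goodSub hE V r) ?_ ?_ ?_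
    · intro j s hs l
      by_cases h : j = l
      · subst h
        rw [DirectSum.decompose_of_mem_same E.gr hs.1]
        exact hs
      · rw [DirectSum.decompose_of_mem_ne E.gr hs.1 h]
        exact Submodule.zero_mem _
    · intro l
      simp
    · intro x y hx hy l
      rw [DirectSum.decompose_add, DirectSum.add_apply, Submodule.coe_add]
      exact Submodule.add_mem _ (hx l) (hy l)
  have h := key i
  rwa [DirectSum.decompose_of_mem_same E.gr hr] at h

end Helpers

/-- every left differential graded Poisson module over `A` becomes a left
differential graded module over `A^e` under `m_a · x = a x` and `h_a · x = {a,x}`. -/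
theorem stmt_10 (k : Type u) [Field k] (M X : Type u)
    [AddCommGroup M] [Module k M] [AddCommGroup X] [Module k X]
    (P : DGPAOn k M) (E : DGAOn k (Env P)) (hE : IsEnvDGA P E)
    (V : DGPModOn P X) :
    ∃ W : DGModOn E X, ModCorr V W := by
  refine ⟨{ grm := V.grm
            decomp := V.decomp
            act := (eAct V).toLinearMap
            act_one := fun x => ?_
            act_mul := fun r s x => ?_
            act_mem := fun hr hx => (mem_goodSub hE V hr).2.1 _ _ hx
            dm := V.dm
            dm_mem := V.dm_mem
            dm_sq := V.dm_sq
            dm_act := fun hr x => (mem_goodSub hE V hr).2.2 x }, rfl, rfl,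
          eAct_mgen V, eAct_hgen V⟩
  · rw [hE.2.1]
    simp
  · rw [hE.1]
    simp

end DGPaper

end
end
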